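/- Let c_k > 0, c_j > 0, ρ ∈ (−1, 1), and T be real, and set T_k = T/√(c_k), T_j = T/√(c_j). Let p(x, y) = (1/(2π√(c_k c_j (1−ρ²))))·exp(−(x²/c_k − 2ρxy/√(c_k c_j) + y²/c_j)/(2(1−ρ²))) be the centered bivariate Gaussian density with variances c_k, c_j and correlation ρ, and let f_ρ denote the standard bivariate Gaussian density with correlation ρ. Then ∫_T^∞ ∫_T^∞ x·y·p(x, y) dy dx = √(c_k c_j) · [ ρ·( T_k·φ(T_k)·(1 − Φ(A)) + T_j·φ(T_j)·(1 − Φ(B)) + Ω ) + (1 − ρ²)·f_ρ(T_k, T_j) ], where A = (T_j − ρT_k)/√(1−ρ²), B = (T_k − ρT_j)/√(1−ρ²), Ω = ∫_{T_k}^∞ ∫_{T_j}^∞ f_ρ(z₁, z₂) dz₂ dz₁, φ(z) = (1/√(2π))·exp(−z²/2) and Φ(z) = ∫_{−∞}^z φ(t) dt. -/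

import Mathlib

open Real

/-- The standard Gaussian probability density function. -/
noncomputable def stdGaussPDF (z : ℝ) : ℝ :=
  (1 / Real.sqrt (2 * Real.pi)) * Real.exp (-z ^ 2 / 2)

/-- The standard Gaussian cumulative distribution function. -/
noncomputable def stdGaussCDF (z : ℝ) : ℝ :=
  ∫ t in Set.Iic z, stdGaussPDF t

/-- The standard bivariate Gaussian density with correlation `ρ`. -/
noncomputable def bivGaussPDF (ρ z₁ z₂ : ℝ) : ℝ :=
  (1 / (2 * Real.pi * Real.sqrt (1 - ρ ^ 2))) *
    Real.exp (-(z₁ ^ 2 - 2 * ρ * z₁ * z₂ + z₂ ^ 2) / (2 * (1 - ρ ^ 2)))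

open MeasureTheory Filter Topology

lemma stdGaussPDF_eq_gaussianPDFReal :
    stdGaussPDF = ProbabilityTheory.gaussianPDFReal 0 1 := by
  funext z
  simp [stdGaussPDF, ProbabilityTheory.gaussianPDFReal]

lemma integrable_stdGaussPDF : Integrable stdGaussPDF := by
  rw [stdGaussPDF_eq_gaussianPDFReal]
  exact ProbabilityTheory.integrable_gaussianPDFReal 0 1

lemma integral_stdGaussPDF : ∫ z, stdGaussPDF z = 1 := by
  rw [stdGaussPDF_eq_gaussianPDFReal]
  exact ProbabilityTheory.integral_gaussianPDFReal_eq_one 0 one_ne_zero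

lemma continuous_stdGaussPDF : Continuous stdGaussPDF := by
  unfold stdGaussPDF
  fun_prop

lemma stdGaussPDF_nonneg (z : ℝ) : 0 ≤ stdGaussPDF z := by
  unfold stdGaussPDF
  positivity

lemma hasDerivAt_stdGaussPDF (z : ℝ) :
    HasDerivAt stdGaussPDF (-z * stdGaussPDF z) z := by
  have h : HasDerivAt (fun z : ℝ => -z ^ 2 / 2) (-z) z := by
    refine ((hasDerivAt_pow 2 z).neg.div_const 2).congr_deriv ?_
    push_cast
    ring
  refine (h.exp.const_mul (1 / Real.sqrt (2 * Real.pi))).congr_deriv ?_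
  unfold stdGaussPDF
  ring

lemma integrable_pow_mul_stdGaussPDF (n : ℕ) :
    Integrable fun z : ℝ => z ^ n * stdGaussPDF z := by
  have h := (integrable_rpow_mul_exp_neg_mul_sq (b := 1 / 2) (by norm_num) (s := (n : ℝ))
    (by have := n.cast_nonneg (α := ℝ); linarith)).const_mul (1 / Real.sqrt (2 * Real.pi))
  refine h.congr (ae_of_all _ fun z => ?_)
  simp only [Real.rpow_natCast, stdGaussPDF]
  rw [show -(1 / 2) * z ^ 2 = -z ^ 2 / 2 by ring]
  ring

lemma integrable_id_mul_stdGaussPDF : Integrable fun z : ℝ => z * stdGaussPDF z := by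
  simpa using integrable_pow_mul_stdGaussPDF 1

lemma tendsto_stdGaussPDF_atTop : Tendsto stdGaussPDF atTop (𝓝 0) :=
  tendsto_zero_of_hasDerivAt_of_integrableOn_Ioi (a := 0)
    (fun z _ => hasDerivAt_stdGaussPDF z)
    (by simpa using integrable_id_mul_stdGaussPDF.neg.integrableOn)
    integrable_stdGaussPDF.integrableOn

lemma hasDerivAt_stdGaussCDF (z : ℝ) : HasDerivAt stdGaussCDF (stdGaussPDF z) z := by
  have h : stdGaussCDF = fun z => (∫ t in (0 : ℝ)..z, stdGaussPDF t) + stdGaussCDF 0 := by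
    funext z
    simp only [stdGaussCDF]
    rw [← intervalIntegral.integral_Iic_sub_Iic integrable_stdGaussPDF.integrableOn
      integrable_stdGaussPDF.integrableOn]
    ring
  rw [h]
  exact (intervalIntegral.integral_hasDerivAt_right
    (continuous_stdGaussPDF.intervalIntegrable _ _)
    (continuous_stdGaussPDF.stronglyMeasurableAtFilter _ _)
    continuous_stdGaussPDF.continuousAt).add_const _

lemma one_sub_stdGaussCDF (z : ℝ) :
    1 - stdGaussCDF z = ∫ t in Set.Ioi z, stdGaussPDF t := by
  rw [← integral_stdGaussPDF, ← intervalIntegral.integral_Iic_add_Ioi (b := z)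
    integrable_stdGaussPDF.integrableOn integrable_stdGaussPDF.integrableOn, stdGaussCDF]
  ring

lemma stdGaussCDF_nonneg (z : ℝ) : 0 ≤ stdGaussCDF z :=
  setIntegral_nonneg measurableSet_Iic fun t _ => stdGaussPDF_nonneg t

lemma stdGaussCDF_le_one (z : ℝ) : stdGaussCDF z ≤ 1 := by
  have h : 0 ≤ 1 - stdGaussCDF z := by
    rw [one_sub_stdGaussCDF]
    exact setIntegral_nonneg measurableSet_Ioi fun t _ => stdGaussPDF_nonneg t
  linarith

lemma norm_one_sub_stdGaussCDF_le (z : ℝ) : ‖1 - stdGaussCDF z‖ ≤ 1 := by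
  rw [Real.norm_eq_abs, abs_le]
  constructor <;> linarith [stdGaussCDF_nonneg z, stdGaussCDF_le_one z]

lemma continuous_stdGaussCDF : Continuous stdGaussCDF :=
  continuous_iff_continuousAt.2 fun z => (hasDerivAt_stdGaussCDF z).continuousAt

lemma tendsto_stdGaussCDF_atTop : Tendsto stdGaussCDF atTop (𝓝 1) := by
  have h := (aecover_Iic (μ := volume) tendsto_id).integral_tendsto_of_countably_generated
    integrable_stdGaussPDF
  rw [integral_stdGaussPDF] at h
  exact h

section Bivariate

variable {ρ : ℝ}

lemma one_sub_sq_pos_of_mem_Ioo (hρ : ρ ∈ Set.Ioo (-1 : ℝ) 1) : 0 < 1 - ρ ^ 2 := by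
  nlinarith [hρ.1, hρ.2]

lemma bivGaussPDF_comm (ρ x y : ℝ) : bivGaussPDF ρ x y = bivGaussPDF ρ y x := by
  unfold bivGaussPDF
  congr 3
  ring

/-- The joint density is the marginal density times the conditional density. -/
lemma bivGaussPDF_eq_marginal_mul_conditional (hρ : ρ ∈ Set.Ioo (-1 : ℝ) 1) (x y : ℝ) :
    bivGaussPDF ρ x y = stdGaussPDF x *
      (stdGaussPDF ((y - ρ * x) / Real.sqrt (1 - ρ ^ 2)) / Real.sqrt (1 - ρ ^ 2)) := by
  have hs := one_sub_sq_pos_of_mem_Ioo hρ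
  have h2 : Real.sqrt (2 * Real.pi) * Real.sqrt (2 * Real.pi) = 2 * Real.pi :=
    Real.mul_self_sqrt (by positivity)
  have he : -(x ^ 2 - 2 * ρ * x * y + y ^ 2) / (2 * (1 - ρ ^ 2)) =
      -x ^ 2 / 2 + -((y - ρ * x) / Real.sqrt (1 - ρ ^ 2)) ^ 2 / 2 := by
    rw [div_pow, Real.sq_sqrt hs.le]
    field_simp
    ring
  unfold bivGaussPDF stdGaussPDF
  rw [he, Real.exp_add, show 1 / (2 * Real.pi * Real.sqrt (1 - ρ ^ 2)) =
    1 / (Real.sqrt (2 * Real.pi) * Real.sqrt (2 * Real.pi) * Real.sqrt (1 - ρ ^ 2)) by rw [h2]]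
  ring

lemma hasDerivAt_conditional_stdGaussCDF (hρ : ρ ∈ Set.Ioo (-1 : ℝ) 1) (x y : ℝ) :
    HasDerivAt (fun y => stdGaussPDF x * stdGaussCDF ((y - ρ * x) / Real.sqrt (1 - ρ ^ 2)))
      (bivGaussPDF ρ x y) y := by
  have h := ((hasDerivAt_stdGaussCDF ((y - ρ * x) / Real.sqrt (1 - ρ ^ 2))).comp y
    (((hasDerivAt_id y).sub_const (ρ * x)).div_const (Real.sqrt (1 - ρ ^ 2)))).const_mul
      (stdGaussPDF x)
  refine h.congr_deriv ?_
  rw [bivGaussPDF_eq_marginal_mul_conditional hρ]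
  ring

lemma hasDerivAt_bivGaussPDF_right (hρ : ρ ∈ Set.Ioo (-1 : ℝ) 1) (x y : ℝ) :
    HasDerivAt (fun y => (1 - ρ ^ 2) * bivGaussPDF ρ x y)
      (-(y - ρ * x) * bivGaussPDF ρ x y) y := by
  have hs := one_sub_sq_pos_of_mem_Ioo hρ
  have hs' := Real.sqrt_pos.2 hs
  have h := (((hasDerivAt_stdGaussPDF ((y - ρ * x) / Real.sqrt (1 - ρ ^ 2))).comp y
    (((hasDerivAt_id y).sub_const (ρ * x)).div_const (Real.sqrt (1 - ρ ^ 2)))).const_mul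
      ((1 - ρ ^ 2) * stdGaussPDF x / Real.sqrt (1 - ρ ^ 2)))
  have hfun : (fun y => (1 - ρ ^ 2) * bivGaussPDF ρ x y) = fun y =>
      (1 - ρ ^ 2) * stdGaussPDF x / Real.sqrt (1 - ρ ^ 2) *
        stdGaussPDF ((y - ρ * x) / Real.sqrt (1 - ρ ^ 2)) := by
    funext y
    rw [bivGaussPDF_eq_marginal_mul_conditional hρ]
    ring
  rw [hfun]
  refine h.congr_deriv ?_
  rw [bivGaussPDF_eq_marginal_mul_conditional hρ]
  generalize stdGaussPDF ((y - ρ * x) / Real.sqrt (1 - ρ ^ 2)) = q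
  have hsq := Real.sq_sqrt hs.le
  generalize Real.sqrt (1 - ρ ^ 2) = r at *
  rw [← hsq]
  field_simp

lemma tendsto_standardize_atTop (hρ : ρ ∈ Set.Ioo (-1 : ℝ) 1) (x : ℝ) :
    Tendsto (fun y => (y - ρ * x) / Real.sqrt (1 - ρ ^ 2)) atTop atTop :=
  (tendsto_atTop_add_const_right _ (-(ρ * x)) tendsto_id).atTop_div_const
    (Real.sqrt_pos.2 (one_sub_sq_pos_of_mem_Ioo hρ))

lemma tendsto_bivGaussPDF_right_atTop (hρ : ρ ∈ Set.Ioo (-1 : ℝ) 1) (x : ℝ) :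
    Tendsto (fun y => bivGaussPDF ρ x y) atTop (𝓝 0) := by
  simp only [bivGaussPDF_eq_marginal_mul_conditional hρ]
  simpa using ((tendsto_stdGaussPDF_atTop.comp (tendsto_standardize_atTop hρ x)).div_const
    (Real.sqrt (1 - ρ ^ 2))).const_mul (stdGaussPDF x)

lemma integrable_bivGaussPDF_right (hρ : ρ ∈ Set.Ioo (-1 : ℝ) 1) (x : ℝ) :
    Integrable fun y => bivGaussPDF ρ x y := by
  simp only [bivGaussPDF_eq_marginal_mul_conditional hρ]
  have hs' := (Real.sqrt_pos.2 (one_sub_sq_pos_of_mem_Ioo hρ)).ne'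
  exact (((integrable_stdGaussPDF.comp_div hs').comp_sub_right (ρ * x)).div_const _).const_mul _

lemma integrable_mul_bivGaussPDF_right (hρ : ρ ∈ Set.Ioo (-1 : ℝ) 1) (x : ℝ) :
    Integrable fun y => y * bivGaussPDF ρ x y := by
  have hs' := (Real.sqrt_pos.2 (one_sub_sq_pos_of_mem_Ioo hρ)).ne'
  have h := (((integrable_id_mul_stdGaussPDF.comp_div hs').comp_sub_right (ρ * x)).const_mul
    (stdGaussPDF x)).add ((integrable_bivGaussPDF_right hρ x).const_mul (ρ * x))
  refine h.congr (ae_of_all _ fun y => ?_)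
  simp only [Pi.add_apply, bivGaussPDF_eq_marginal_mul_conditional hρ]
  generalize stdGaussPDF ((y - ρ * x) / Real.sqrt (1 - ρ ^ 2)) = q
  field_simp
  ring

lemma integral_Ioi_bivGaussPDF_right (hρ : ρ ∈ Set.Ioo (-1 : ℝ) 1) (x b : ℝ) :
    ∫ y in Set.Ioi b, bivGaussPDF ρ x y =
      stdGaussPDF x * (1 - stdGaussCDF ((b - ρ * x) / Real.sqrt (1 - ρ ^ 2))) := by
  have hlim := (tendsto_stdGaussCDF_atTop.comp (tendsto_standardize_atTop hρ x)).const_mul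
    (stdGaussPDF x)
  rw [integral_Ioi_of_hasDerivAt_of_tendsto'
    (fun y _ => hasDerivAt_conditional_stdGaussCDF hρ x y)
    (integrable_bivGaussPDF_right hρ x).integrableOn hlim]
  ring

lemma integral_Ioi_mul_bivGaussPDF_right (hρ : ρ ∈ Set.Ioo (-1 : ℝ) 1) (x b : ℝ) :
    ∫ y in Set.Ioi b, y * bivGaussPDF ρ x y =
      (1 - ρ ^ 2) * bivGaussPDF ρ x b + ρ * (x * (stdGaussPDF x *
        (1 - stdGaussCDF ((b - ρ * x) / Real.sqrt (1 - ρ ^ 2))))) := by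
  have hint := (integrable_bivGaussPDF_right hρ x).const_mul (ρ * x)
  have hcentered := integral_Ioi_of_hasDerivAt_of_tendsto' (a := b)
    (fun y _ => hasDerivAt_bivGaussPDF_right hρ x y)
    (((hint.sub (integrable_mul_bivGaussPDF_right hρ x)).congr
      (ae_of_all _ fun y => by simp only [Pi.sub_apply]; ring)).integrableOn)
    ((tendsto_bivGaussPDF_right_atTop hρ x).const_mul (1 - ρ ^ 2))
  have hsplit : ∀ y, y * bivGaussPDF ρ x y =
      ρ * x * bivGaussPDF ρ x y - -(y - ρ * x) * bivGaussPDF ρ x y := fun y => by ring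
  simp only [hsplit]
  rw [integral_sub hint.integrableOn ((hint.sub (integrable_mul_bivGaussPDF_right hρ x)).congr
      (ae_of_all _ fun y => by simp only [Pi.sub_apply]; ring)).integrableOn,
    hcentered, integral_const_mul, integral_Ioi_bivGaussPDF_right hρ]
  ring

lemma integrable_pow_mul_stdGaussPDF_mul_tail (ρ b : ℝ) (n : ℕ) :
    Integrable fun x => x ^ n * (stdGaussPDF x *
      (1 - stdGaussCDF ((b - ρ * x) / Real.sqrt (1 - ρ ^ 2)))) := by
  have hc : Continuous fun x => 1 - stdGaussCDF ((b - ρ * x) / Real.sqrt (1 - ρ ^ 2)) :=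
    continuous_const.sub (continuous_stdGaussCDF.comp (by fun_prop))
  have h := (integrable_pow_mul_stdGaussPDF n).mul_bdd (c := 1) hc.aestronglyMeasurable
    (ae_of_all _ fun x => norm_one_sub_stdGaussCDF_le _)
  simpa only [mul_assoc] using h

lemma hasDerivAt_mul_stdGaussPDF_mul_tail (hρ : ρ ∈ Set.Ioo (-1 : ℝ) 1) (b x : ℝ) :
    HasDerivAt (fun x => x * (stdGaussPDF x *
        (1 - stdGaussCDF ((b - ρ * x) / Real.sqrt (1 - ρ ^ 2)))))
      (stdGaussPDF x * (1 - stdGaussCDF ((b - ρ * x) / Real.sqrt (1 - ρ ^ 2)))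
        - x ^ 2 * (stdGaussPDF x * (1 - stdGaussCDF ((b - ρ * x) / Real.sqrt (1 - ρ ^ 2))))
        + ρ * (x * bivGaussPDF ρ x b)) x := by
  have haff : HasDerivAt (fun x => (b - ρ * x) / Real.sqrt (1 - ρ ^ 2))
      (-(ρ * 1) / Real.sqrt (1 - ρ ^ 2)) x :=
    (((hasDerivAt_id x).const_mul ρ).const_sub b).div_const _
  have h := (hasDerivAt_id x).mul ((hasDerivAt_stdGaussPDF x).mul
    (((hasDerivAt_stdGaussCDF _).comp x haff).const_sub 1))
  refine h.congr_deriv ?_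
  rw [bivGaussPDF_eq_marginal_mul_conditional hρ]
  simp only [id, Function.comp, Pi.mul_apply]
  ring

/-- The second moment of the truncated first coordinate, by integration by parts. -/
lemma integral_Ioi_sq_mul_stdGaussPDF_mul_tail (hρ : ρ ∈ Set.Ioo (-1 : ℝ) 1) (a b : ℝ) :
    ∫ x in Set.Ioi a, x ^ 2 * (stdGaussPDF x *
        (1 - stdGaussCDF ((b - ρ * x) / Real.sqrt (1 - ρ ^ 2)))) =
      a * (stdGaussPDF a * (1 - stdGaussCDF ((b - ρ * a) / Real.sqrt (1 - ρ ^ 2))))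
      + (∫ x in Set.Ioi a, stdGaussPDF x *
          (1 - stdGaussCDF ((b - ρ * x) / Real.sqrt (1 - ρ ^ 2))))
      + ρ * ∫ x in Set.Ioi a, x * bivGaussPDF ρ x b := by
  have h0 := integrable_pow_mul_stdGaussPDF_mul_tail ρ b 0
  have h1 := integrable_pow_mul_stdGaussPDF_mul_tail ρ b 1
  have h2 := integrable_pow_mul_stdGaussPDF_mul_tail ρ b 2
  have hm : Integrable fun x => ρ * (x * bivGaussPDF ρ x b) := by
    simp only [bivGaussPDF_comm ρ _ b]
    exact (integrable_mul_bivGaussPDF_right hρ b).const_mul ρ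
  simp only [pow_zero, one_mul, pow_one] at h0 h1
  have hd : IntegrableOn _ (Set.Ioi a) := ((h0.sub h2).add hm).integrableOn
  have hlim := tendsto_zero_of_hasDerivAt_of_integrableOn_Ioi (a := a)
    (fun x _ => hasDerivAt_mul_stdGaussPDF_mul_tail hρ b x) hd h1.integrableOn
  have hparts := integral_Ioi_of_hasDerivAt_of_tendsto' (a := a)
    (fun x _ => hasDerivAt_mul_stdGaussPDF_mul_tail hρ b x) hd hlim
  rw [integral_add (by exact (h0.sub h2).integrableOn) hm.integrableOn,
    integral_sub h0.integrableOn h2.integrableOn, integral_const_mul] at hparts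
  linarith

/-- The doubly truncated cross moment of a standard bivariate Gaussian. -/
lemma integral_Ioi_integral_Ioi_mul_bivGaussPDF (hρ : ρ ∈ Set.Ioo (-1 : ℝ) 1) (a b : ℝ) :
    ∫ x in Set.Ioi a, ∫ y in Set.Ioi b, x * y * bivGaussPDF ρ x y =
      ρ * (a * stdGaussPDF a * (1 - stdGaussCDF ((b - ρ * a) / Real.sqrt (1 - ρ ^ 2)))
        + b * stdGaussPDF b * (1 - stdGaussCDF ((a - ρ * b) / Real.sqrt (1 - ρ ^ 2)))
        + ∫ x in Set.Ioi a, ∫ y in Set.Ioi b, bivGaussPDF ρ x y)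
      + (1 - ρ ^ 2) * bivGaussPDF ρ a b := by
  have hinner : ∀ x, ∫ y in Set.Ioi b, x * y * bivGaussPDF ρ x y =
      (1 - ρ ^ 2) * (x * bivGaussPDF ρ x b) + ρ * (x ^ 2 * (stdGaussPDF x *
        (1 - stdGaussCDF ((b - ρ * x) / Real.sqrt (1 - ρ ^ 2))))) := fun x => by
    simp only [mul_assoc x]
    rw [integral_const_mul, integral_Ioi_mul_bivGaussPDF_right hρ]
    ring
  have hm : Integrable fun x => x * bivGaussPDF ρ x b := by
    simp only [bivGaussPDF_comm ρ _ b]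
    exact integrable_mul_bivGaussPDF_right hρ b
  have hmval := integral_Ioi_mul_bivGaussPDF_right hρ b a
  simp only [bivGaussPDF_comm ρ b] at hmval
  simp only [hinner, integral_Ioi_bivGaussPDF_right hρ]
  rw [integral_add (hm.const_mul _).integrableOn
    ((integrable_pow_mul_stdGaussPDF_mul_tail ρ b 2).const_mul _).integrableOn,
    integral_const_mul, integral_const_mul, integral_Ioi_sq_mul_stdGaussPDF_mul_tail hρ, hmval]
  ring

end Bivariate

lemma integral_Ioi_eq_mul_integral_Ioi_div (g : ℝ → ℝ) (T : ℝ) {r : ℝ} (hr : 0 < r) :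
    ∫ x in Set.Ioi T, g x = r * ∫ u in Set.Ioi (T / r), g (r * u) := by
  rw [integral_comp_mul_left_Ioi g _ hr, mul_div_cancel₀ _ hr.ne', smul_eq_mul,
    mul_inv_cancel_left₀ hr.ne']

/-- Lemma 7 of the paper: the doubly-truncated cross moment of a centered bivariate
Gaussian with variances `c_k, c_j > 0` and correlation `ρ ∈ (−1,1)`, both components
truncated at the activation threshold `T`. -/
theorem bivariate_gaussian_truncated_cross_moment_scaled
    (ck cj ρ T : ℝ) (hck : 0 < ck) (hcj : 0 < cj) (hρ : ρ ∈ Set.Ioo (-1 : ℝ) 1)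
    (Tk Tj : ℝ) (hTk : Tk = T / Real.sqrt ck) (hTj : Tj = T / Real.sqrt cj)
    (p : ℝ → ℝ → ℝ)
    (hp : ∀ x y, p x y = (1 / (2 * Real.pi * Real.sqrt (ck * cj * (1 - ρ ^ 2)))) *
        Real.exp (-(x ^ 2 / ck - 2 * ρ * x * y / Real.sqrt (ck * cj) + y ^ 2 / cj) /
          (2 * (1 - ρ ^ 2))))
    (A B Omega : ℝ)
    (hA : A = (Tj - ρ * Tk) / Real.sqrt (1 - ρ ^ 2))
    (hB : B = (Tk - ρ * Tj) / Real.sqrt (1 - ρ ^ 2))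
    (hOmega : Omega = ∫ z₁ in Set.Ioi Tk, ∫ z₂ in Set.Ioi Tj, bivGaussPDF ρ z₁ z₂) :
    (∫ x in Set.Ioi T, ∫ y in Set.Ioi T, x * y * p x y)
      = Real.sqrt (ck * cj) *
          (ρ * (Tk * stdGaussPDF Tk * (1 - stdGaussCDF A)
              + Tj * stdGaussPDF Tj * (1 - stdGaussCDF B) + Omega)
            + (1 - ρ ^ 2) * bivGaussPDF ρ Tk Tj) := by
  have hs := one_sub_sq_pos_of_mem_Ioo hρ
  have hk := Real.sqrt_pos.2 hck
  have hj := Real.sqrt_pos.2 hcj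
  have hscale : ∀ u v, p (Real.sqrt ck * u) (Real.sqrt cj * v) =
      bivGaussPDF ρ u v / Real.sqrt (ck * cj) := fun u v => by
    have he : (Real.sqrt ck * u) ^ 2 / ck -
        2 * ρ * (Real.sqrt ck * u) * (Real.sqrt cj * v) / Real.sqrt (ck * cj) +
        (Real.sqrt cj * v) ^ 2 / cj = u ^ 2 - 2 * ρ * u * v + v ^ 2 := by
      rw [mul_pow, mul_pow, Real.sq_sqrt hck.le, Real.sq_sqrt hcj.le, Real.sqrt_mul hck.le]
      field_simp
    rw [hp, he, bivGaussPDF, Real.sqrt_mul (mul_pos hck hcj).le]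
    field_simp
  have hcross : ∀ u v, Real.sqrt ck * u * (Real.sqrt cj * v) *
      p (Real.sqrt ck * u) (Real.sqrt cj * v) = u * v * bivGaussPDF ρ u v := fun u v => by
    rw [hscale, Real.sqrt_mul hck.le]
    field_simp
  rw [integral_Ioi_eq_mul_integral_Ioi_div _ T hk]
  simp only [integral_Ioi_eq_mul_integral_Ioi_div _ T hj, hcross]
  rw [integral_const_mul, ← hTk, ← hTj, integral_Ioi_integral_Ioi_mul_bivGaussPDF hρ,
    hA, hB, hOmega, Real.sqrt_mul hck.le]
  ring
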